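/- arXiv:1509.08263 — 5 statements merged into one kernel-verified Lean document; each statement's English description precedes it below -/
import Mathlib

section
/- Let x be an n×n complex hermitian positive semidefinite matrix of rank 1 and let u be an n×n complex hermitian matrix. Then the matrix i·[u, x] (i the imaginary unit) is hermitian and lies in the image of the Jordan multiplication operator L_x on hermitian matrices; that is, there exists an n×n complex hermitian matrix w such that (1/2)(x·w + w·x) = i·(u·x − x·u). -/
open Matrix
open scoped ComplexOrder

/-!
A matrix `x` of rank at most one satisfies `x * x = x.trace • x`. Commutation with a fixed `k` is a
derivation, so `x * ⁅k, x⁆ + ⁅k, x⁆ * x = ⁅k, x * x⁆ = x.trace • ⁅k, x⁆`: the commutator is an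
eigenvector of `L_x` with eigenvalue `x.trace / 2`. For hermitian `x` this eigenvalue is real, and
it vanishes only if `xᴴ * x = x * x = 0`, that is, if `x = 0`; so dividing the commutator by it
gives a hermitian preimage.
-/

section Commutator

variable {A : Type*} [NonUnitalRing A]

theorem mul_lie_add_lie_mul (k x : A) : x * ⁅k, x⁆ + ⁅k, x⁆ * x = ⁅k, x * x⁆ := by
  simp only [Ring.lie_def]
  noncomm_ring

theorem isSelfAdjoint_lie_of_mem_skewAdjoint [StarRing A] {k x : A} (hk : k ∈ skewAdjoint A)
    (hx : IsSelfAdjoint x) : IsSelfAdjoint ⁅k, x⁆ := by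
  rw [skewAdjoint.mem_iff] at hk
  rw [isSelfAdjoint_iff, Ring.lie_def, star_sub, star_mul, star_mul, hk, hx.star_eq, mul_neg,
    neg_mul, sub_neg_eq_add, neg_add_eq_sub]

theorem mul_lie_add_lie_mul_of_mul_self_eq_smul {R : Type*} [Monoid R] [DistribMulAction R A]
    [IsScalarTower R A A] [SMulCommClass R A A] {x : A} {t : R} (hxx : x * x = t • x) (k : A) :
    x * ⁅k, x⁆ + ⁅k, x⁆ * x = t • ⁅k, x⁆ := by
  rw [mul_lie_add_lie_mul, hxx, Ring.lie_def, Ring.lie_def, mul_smul_comm, smul_mul_assoc, smul_sub]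

theorem exists_isSelfAdjoint_half_smul_mul_add_mul_eq_lie {K : Type*} [Field K]
    [NeZero (2 : K)] [StarRing K] [StarRing A] [Module K A] [IsScalarTower K A A]
    [SMulCommClass K A A] [StarModule K A] {k x : A} {t : K} (hk : k ∈ skewAdjoint A)
    (hx : IsSelfAdjoint x) (ht : IsSelfAdjoint t) (ht₀ : t ≠ 0) (hxx : x * x = t • x) :
    ∃ w : A, IsSelfAdjoint w ∧ (1 / 2 : K) • (x * w + w * x) = ⁅k, x⁆ := by
  have h_real : IsSelfAdjoint (2 / t) := (IsSelfAdjoint.ofNat 2).div ht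
  refine ⟨(2 / t) • ⁅k, x⁆, h_real.smul (isSelfAdjoint_lie_of_mem_skewAdjoint hk hx), ?_⟩
  calc (1 / 2 : K) • (x * (2 / t) • ⁅k, x⁆ + (2 / t) • ⁅k, x⁆ * x)
      = (1 / 2 : K) • (2 / t) • (x * ⁅k, x⁆ + ⁅k, x⁆ * x) := by
        rw [mul_smul_comm, smul_mul_assoc, smul_add (2 / t)]
    _ = (1 / 2 * (2 / t) * t) • ⁅k, x⁆ := by
        rw [mul_lie_add_lie_mul_of_mul_self_eq_smul hxx, smul_smul, smul_smul, mul_assoc]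
    _ = ⁅k, x⁆ := by
        have h_scalar : 1 / 2 * (2 / t) * t = 1 := by field_simp
        rw [h_scalar, one_smul]

end Commutator

theorem isSelfAdjoint_trace_of_isHermitian {R n : Type*} [AddCommMonoid R] [StarAddMonoid R]
    [Fintype n] {x : Matrix n n R} (hx : x.IsHermitian) : IsSelfAdjoint x.trace := by
  rw [isSelfAdjoint_iff, ← trace_conjTranspose, hx.eq]

section RankOne

variable {K m n : Type*} [Field K] [Fintype n]

theorem exists_eq_vecMulVec_of_rank_le_one {x : Matrix m n K} (hrank : x.rank ≤ 1) :
    ∃ a b, x = vecMulVec a b := by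
  classical
  obtain ⟨a, ha⟩ := finrank_le_one_iff.mp hrank
  choose b hb using fun j => ha ⟨x *ᵥ Pi.single j 1, LinearMap.mem_range_self x.mulVecLin _⟩
  refine ⟨a, b, ext fun i j => ?_⟩
  simpa [vecMulVec_apply, mul_comm] using (congrFun (congrArg Subtype.val (hb j)) i).symm

theorem mul_self_eq_trace_smul_of_rank_le_one {x : Matrix n n K} (hrank : x.rank ≤ 1) :
    x * x = x.trace • x := by
  obtain ⟨a, b, rfl⟩ := exists_eq_vecMulVec_of_rank_le_one hrank
  rw [vecMulVec_mul_vecMulVec, trace_vecMulVec, dotProduct_comm, vecMulVec_smul]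

variable [StarRing K] [PartialOrder K] [StarOrderedRing K]

theorem trace_ne_zero_of_isHermitian_of_rank_le_one {x : Matrix n n K} (hx : x.IsHermitian)
    (hrank : x.rank ≤ 1) (hx₀ : x ≠ 0) : x.trace ≠ 0 := by
  intro htrace
  apply hx₀
  rw [← conjTranspose_mul_self_eq_zero, hx.eq, mul_self_eq_trace_smul_of_rank_le_one hrank, htrace,
    zero_smul]

theorem i_commutator_hermitian_mem_image_Lx_general {k x : Matrix n n K} (hx : x.IsHermitian)
    (hrank : x.rank ≤ 1) (hk : k ∈ skewAdjoint (Matrix n n K)) :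
    (k * x - x * k).IsHermitian ∧
    ∃ w : Matrix n n K, w.IsHermitian ∧ (1 / 2 : K) • (x * w + w * x) = k * x - x * k := by
  refine ⟨isSelfAdjoint_lie_of_mem_skewAdjoint hk hx, ?_⟩
  obtain rfl | hx₀ := eq_or_ne x 0
  · exact ⟨0, isHermitian_zero, by simp⟩
  · exact exists_isSelfAdjoint_half_smul_mul_add_mul_eq_lie hk hx
      (isSelfAdjoint_trace_of_isHermitian hx)
      (trace_ne_zero_of_isHermitian_of_rank_le_one hx hrank hx₀)
      (mul_self_eq_trace_smul_of_rank_le_one hrank)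

end RankOne

theorem i_commutator_hermitian_mem_image_Lx
    (n : ℕ) (hn : 2 ≤ n) (x u : Matrix (Fin n) (Fin n) ℂ)
    (hherm : x.IsHermitian) (hpsd : x.PosSemidef) (hrank : x.rank = 1)
    (hu : u.IsHermitian) :
    (Complex.I • (u * x - x * u)).IsHermitian ∧
    ∃ w : Matrix (Fin n) (Fin n) ℂ, w.IsHermitian ∧
      (1 / 2 : ℂ) • (x * w + w * x) = Complex.I • (u * x - x * u) := by
  simpa only [smul_sub, smul_mul_assoc, mul_smul_comm] using
    i_commutator_hermitian_mem_image_Lx_general hherm hrank.le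
      (Complex.I_smul_mem_skewAdjoint_iff_isSelfAdjoint.mpr hu)
end

section
/- Let x be an n×n complex hermitian positive semidefinite matrix of rank 1 and let π be an n×n complex hermitian matrix lying in the image of L_x, i.e. π = x∘w for some hermitian matrix w. Then π·x + x·π = (tr x)·π + (tr π)·x, i.e. 2·(π∘x) = (tr x)·π + (tr π)·x. -/
open Matrix
open scoped ComplexOrder

/-- The Jordan product of two matrices. -/
noncomputable def jordanProd {n : ℕ} (a b : Matrix (Fin n) (Fin n) ℂ) :
    Matrix (Fin n) (Fin n) ℂ :=
  (1 / 2 : ℂ) • (a * b + b * a)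

/-!
A matrix `x` of rank at most one is an outer product `u vᵀ`, so `x w x = u (vᵀ w u) vᵀ` is the
multiple `tr(x w) x` of `x`, for every `w`. In particular `x² = (tr x) x`. Expanding `p x + x p`
for `p = x w + w x`, the outer terms give `w x² + x² w = (tr x) p`, and the two copies of `x w x`
give `2 tr(x w) x = (tr p) x`. The factor `1 / 2` of the Jordan product is absorbed into `w`.
-/

section RankLeOne

variable {K m n : Type*}

theorem rank_le_one_iff_exists_eq_vecMulVec [Field K] [Fintype n] {x : Matrix m n K} :
    x.rank ≤ 1 ↔ ∃ u v, x = vecMulVec u v := by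
  constructor
  · intro hx
    rw [rank, finrank_le_one_iff] at hx
    obtain ⟨⟨u, _⟩, hu⟩ := hx
    classical
    have hcol (j : n) : ∃ c : K, c • u = x.col j := by
      obtain ⟨c, hc⟩ := hu ⟨x.col j, Pi.single j 1, by simp⟩
      exact ⟨c, congrArg Subtype.val hc⟩
    choose v hv using hcol
    refine ⟨u, v, ?_⟩
    ext i j
    calc x i j = v j * u i := (congrFun (hv j) i).symm
      _ = vecMulVec u v i j := mul_comm _ _
  · rintro ⟨u, v, rfl⟩
    exact rank_vecMulVec_le u v

theorem vecMulVec_mul_mul_vecMulVec_self [CommSemiring K] [Fintype m] [Fintype n]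
    (u : m → K) (v : n → K) (w : Matrix n m K) :
    vecMulVec u v * w * vecMulVec u v = (vecMulVec u v * w).trace • vecMulVec u v := by
  rw [vecMulVec_mul, vecMulVec_mul_vecMulVec, trace_vecMulVec, vecMulVec_smul,
    dotProduct_comm]

theorem mul_mul_self_of_rank_le_one [Field K] [Fintype m] [Fintype n] {x : Matrix m n K}
    (hx : x.rank ≤ 1) (w : Matrix n m K) : x * w * x = (x * w).trace • x := by
  obtain ⟨u, v, rfl⟩ := rank_le_one_iff_exists_eq_vecMulVec.mp hx
  exact vecMulVec_mul_mul_vecMulVec_self u v w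

theorem mul_self_of_rank_le_one [Field K] [Fintype n] {x : Matrix n n K} (hx : x.rank ≤ 1) :
    x * x = x.trace • x := by
  classical simpa using mul_mul_self_of_rank_le_one hx 1

theorem rank_one_psd_tangent_vector_identity_general [Field K] [Fintype n] {x p : Matrix n n K}
    (hx : x.rank ≤ 1) (hp : ∃ w, p = x * w + w * x) :
    p * x + x * p = x.trace • p + p.trace • x := by
  obtain ⟨w, rfl⟩ := hp
  have htrace : (x * w + w * x).trace = 2 * (x * w).trace := by
    rw [trace_add, trace_mul_comm w x, two_mul]
  calc (x * w + w * x) * x + x * (x * w + w * x)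
      = w * (x * x) + x * x * w + (2 : K) • (x * w * x) := by
        rw [two_smul]
        noncomm_ring
    _ = x.trace • (x * w + w * x) + (x * w + w * x).trace • x := by
        rw [mul_self_of_rank_le_one hx, mul_mul_self_of_rank_le_one hx, htrace,
          mul_smul_comm, smul_mul_assoc]
        module

end RankLeOne

theorem rank_one_psd_tangent_vector_identity
    (n : ℕ) (hn : 2 ≤ n) (x p : Matrix (Fin n) (Fin n) ℂ)
    (hherm : x.IsHermitian) (hpsd : x.PosSemidef) (hrank : x.rank = 1)
    (hp : ∃ w : Matrix (Fin n) (Fin n) ℂ, w.IsHermitian ∧ p = jordanProd x w) :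
    p * x + x * p = x.trace • p + p.trace • x := by
  obtain ⟨w, -, rfl⟩ := hp
  exact rank_one_psd_tangent_vector_identity_general hrank.le
    ⟨(1 / 2 : ℂ) • w, by simp [jordanProd]⟩
end

section
/- Let x be an n×n complex hermitian positive semidefinite matrix of rank 1 and let π be an n×n complex hermitian matrix lying in the image of L_x, i.e. π = x∘w for some hermitian matrix w. Then S_{πx}([π, x]) = (1/4)·(tr x)·[π·π, x] + (1/4)·(tr π)·(tr x)·[π, x], where S_{πx}(z) = π∘(x∘z) − x∘(π∘z) + (π∘x)∘z. -/
open Matrix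
open scoped ComplexOrder

/-- The operator `S_{uv}` sending `z` to `u∘(v∘z) − v∘(u∘z) + (u∘v)∘z`. -/
noncomputable def Sop {n : ℕ} (u v z : Matrix (Fin n) (Fin n) ℂ) :
    Matrix (Fin n) (Fin n) ℂ :=
  jordanProd u (jordanProd v z) - jordanProd v (jordanProd u z)
    + jordanProd (jordanProd u v) z

/-!
If `x` has rank at most one, then `x z x = tr(x z) x` for every `z`. Since
`u∘(v∘z) − v∘(u∘z) = ¼ [[u, v], z]`, the first two terms of `S_{px}` cancel on `z = [p, x]`, and
`(a + b)∘(a − b) = a² − b²` with `a = px` and `b = xp` leaves `S_{px}([p, x]) = ½ [p, xpx]`.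
For `p = x∘w` this is `½ tr(x) tr(p) [p, x]`. Such a `p` moreover satisfies, for one and the same
scalar `c`, both `p² x = tr(p) p x + c x` and `x p² = tr(p) x p + c x`; hence
`[p², x] = tr(p) [p, x]`, and the two terms on the right-hand side are equal.
-/

section RankOne

variable {K m n : Type*} [Field K] [Fintype n]

theorem exists_eq_vecMulVec_of_rank_le_one_s7 {A : Matrix m n K} (hA : A.rank ≤ 1) :
    ∃ (u : m → K) (v : n → K), A = vecMulVec u v := by
  classical
  obtain ⟨u, hu⟩ := (Submodule.finrank_le_one_iff_isPrincipal _).1 hA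
  have col_mem_span (j : n) : A.col j ∈ Submodule.span K {u} := by
    rw [← hu, ← mulVec_single_one]
    exact LinearMap.mem_range_self A.mulVecLin _
  choose v hv using fun j => Submodule.mem_span_singleton.1 (col_mem_span j)
  refine ⟨u, v, ?_⟩
  ext i j
  rw [vecMulVec_apply, mul_comm]
  exact (congrFun (hv j) i).symm

theorem mul_mul_self_eq_trace_smul_of_rank_le_one [Fintype m] {A : Matrix m n K}
    (hA : A.rank ≤ 1) (B : Matrix n m K) : A * B * A = (A * B).trace • A := by
  obtain ⟨u, v, rfl⟩ := exists_eq_vecMulVec_of_rank_le_one_s7 hA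
  rw [vecMulVec_mul, vecMulVec_mul_vecMulVec, trace_vecMulVec, vecMulVec_smul, dotProduct_comm]

end RankOne

section Anticommutator

variable {R A : Type*} [CommRing R] [Ring A] [Algebra R A] {x : A} {τ : A → R}

theorem mul_self_eq_smul (hx : ∀ z, x * z * x = τ z • x) : x * x = τ 1 • x := by
  simpa only [mul_one] using hx 1

theorem anticommutator_mul (hx : ∀ z, x * z * x = τ z • x) (w : A) :
    (x * w + w * x) * x = τ w • x + τ 1 • (w * x) := by
  rw [add_mul, hx, mul_assoc, mul_self_eq_smul hx, mul_smul_comm]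

theorem mul_anticommutator_mul (hx : ∀ z, x * z * x = τ z • x) (w : A) :
    x * (x * w + w * x) * x = (2 * τ 1 * τ w) • x := by
  rw [mul_assoc, anticommutator_mul hx, mul_add, mul_smul_comm, mul_smul_comm, ← mul_assoc, hx,
    mul_self_eq_smul hx]
  module

theorem anticommutator_sq_mul (hx : ∀ z, x * z * x = τ z • x) {w p : A} (hp : p = x * w + w * x) :
    p * p * x = (2 * τ w) • (p * x) + (τ 1 * τ (w * w) - τ w ^ 2) • x := by
  have p_mul_x : p * x = τ w • x + τ 1 • (w * x) := hp ▸ anticommutator_mul hx w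
  have p_mul_w_mul_x : p * (w * x) = τ (w * w) • x + τ w • (w * x) := by
    rw [hp, add_mul, mul_assoc w, ← mul_assoc x w x, hx, mul_smul_comm, ← hx (w * w)]
    simp only [mul_assoc]
  calc p * p * x = τ w • (p * x) + τ 1 • (p * (w * x)) := by
        rw [mul_assoc, p_mul_x, mul_add, mul_smul_comm, mul_smul_comm, p_mul_x]
    _ = (2 * τ w) • (p * x) + (τ 1 * τ (w * w) - τ w ^ 2) • x := by
        rw [p_mul_w_mul_x, p_mul_x]
        module

open MulOpposite in
theorem mul_anticommutator_sq (hx : ∀ z, x * z * x = τ z • x) {w p : A} (hp : p = x * w + w * x) :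
    x * (p * p) = (2 * τ w) • (x * p) + (τ 1 * τ (w * w) - τ w ^ 2) • x := by
  have hx_op (z : Aᵐᵒᵖ) : op x * z * op x = τ z.unop • op x := by
    rw [← op_smul, ← hx, mul_assoc x, op_mul, op_mul, op_unop]
  have hp_op : op p = op x * op w + op w * op x := by
    rw [hp, add_comm, op_add, op_mul, op_mul]
  exact op_injective (anticommutator_sq_mul hx_op hp_op)

theorem lie_anticommutator_sq (hx : ∀ z, x * z * x = τ z • x) {w p : A}
    (hp : p = x * w + w * x) : ⁅p * p, x⁆ = (2 * τ w) • ⁅p, x⁆ := by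
  rw [Ring.lie_def, anticommutator_sq_mul hx hp, mul_anticommutator_sq hx hp, Ring.lie_def,
    smul_sub, add_sub_add_right_eq_sub]

end Anticommutator

section Jordan

variable {n : ℕ} (u v z : Matrix (Fin n) (Fin n) ℂ)

theorem jordanProd_jordanProd_sub_jordanProd_jordanProd :
    jordanProd u (jordanProd v z) - jordanProd v (jordanProd u z)
      = (1 / 4 : ℂ) • ⁅⁅u, v⁆, z⁆ := by
  simp only [jordanProd, Ring.lie_def, mul_add, add_mul, mul_sub, sub_mul, mul_smul_comm,
    smul_mul_assoc, mul_assoc]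
  module

theorem jordanProd_jordanProd_lie :
    jordanProd (jordanProd u v) ⁅u, v⁆ = (1 / 2 : ℂ) • ⁅u, v * u * v⁆ := by
  simp only [jordanProd, Ring.lie_def, mul_add, add_mul, mul_sub, sub_mul, mul_smul_comm,
    smul_mul_assoc, mul_assoc]
  module

theorem Sop_lie : Sop u v ⁅u, v⁆ = (1 / 2 : ℂ) • ⁅u, v * u * v⁆ := by
  rw [Sop, jordanProd_jordanProd_sub_jordanProd_jordanProd, Ring.lie_def ⁅u, v⁆, sub_self,
    smul_zero, zero_add, jordanProd_jordanProd_lie]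

theorem trace_jordanProd : (jordanProd u v).trace = (u * v).trace := by
  rw [jordanProd, trace_smul, trace_add, trace_mul_comm v u, smul_eq_mul]
  ring

end Jordan

theorem rank_one_psd_S_identity_general {n : ℕ} {x p : Matrix (Fin n) (Fin n) ℂ}
    (hrank : x.rank ≤ 1) (hp : ∃ w, p = jordanProd x w) :
    Sop p x (p * x - x * p)
      = ((1 / 4 : ℂ) * x.trace) • (p * p * x - x * (p * p))
        + ((1 / 4 : ℂ) * p.trace * x.trace) • (p * x - x * p) := by
  obtain ⟨w, hw⟩ := hp
  have hx := mul_mul_self_eq_trace_smul_of_rank_le_one hrank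
  have p_eq : p = x * ((1 / 2 : ℂ) • w) + ((1 / 2 : ℂ) • w) * x := by
    rw [hw, jordanProd, smul_add, mul_smul_comm, smul_mul_assoc]
  have trace_p : 2 * (x * ((1 / 2 : ℂ) • w)).trace = p.trace := by
    rw [hw, trace_jordanProd, mul_smul_comm, trace_smul, smul_eq_mul]
    ring
  have x_mul_p_mul_x : x * p * x = (x.trace * p.trace) • x := by
    rw [p_eq, mul_anticommutator_mul hx, ← p_eq, ← trace_p, mul_one]
    module
  have lie_p_sq : ⁅p * p, x⁆ = p.trace • ⁅p, x⁆ := by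
    rw [lie_anticommutator_sq hx p_eq, trace_p]
  have lie_x_mul_p_mul_x : ⁅p, x * p * x⁆ = (x.trace * p.trace) • ⁅p, x⁆ := by
    rw [x_mul_p_mul_x, Ring.lie_def, mul_smul_comm, smul_mul_assoc, ← smul_sub, Ring.lie_def]
  rw [← Ring.lie_def, ← Ring.lie_def, Sop_lie, lie_x_mul_p_mul_x, lie_p_sq]
  module

theorem rank_one_psd_S_identity
    (n : ℕ) (hn : 2 ≤ n) (x p : Matrix (Fin n) (Fin n) ℂ)
    (hherm : x.IsHermitian) (hpsd : x.PosSemidef) (hrank : x.rank = 1)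
    (hp : ∃ w : Matrix (Fin n) (Fin n) ℂ, w.IsHermitian ∧ p = jordanProd x w) :
    Sop p x (p * x - x * p)
      = ((1 / 4 : ℂ) * x.trace) • (p * p * x - x * (p * p))
        + ((1 / 4 : ℂ) * p.trace * x.trace) • (p * x - x * p) :=
  rank_one_psd_S_identity_general hrank.le (hp.imp fun _ => And.right)
end

section
/- Let x be an n×n complex hermitian positive semidefinite matrix of rank 1 and let π be an n×n complex hermitian matrix lying in the image of L_x, i.e. π = x∘w for some hermitian matrix w. Then tr((π∘x)·(π∘x)) = ((tr x)²/4)·(tr(π·π) + 3·(tr π)²). -/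
open Matrix
open scoped ComplexOrder

/-!
A matrix `x` of rank one satisfies `x a x = tr (x a) • x` for every `a`. If `p = x w + w x`, this
gives `p x + x p = tr p • x + tr x • p` and `tr (x p) = tr x * tr p`, so squaring the first identity
and taking traces leaves only `tr x`, `tr p` and `tr (p p)`.
-/

/-- All `2 × 2` minors of the matrix vanish. Over a domain this says that the rank is at most one;
the equation is written without subtraction so that it makes sense over a semiring. -/
def TwoMinorsVanish {R m n : Type*} [Mul R] (x : Matrix m n R) : Prop :=
  ∀ i k j l, x i j * x k l = x i l * x k j

theorem twoMinorsVanish_of_rank_le_one {R m n : Type*} [CommRing R] [IsDomain R] [Fintype n]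
    {x : Matrix m n R} (hx : x.rank ≤ 1) : TwoMinorsVanish x := by
  intro i k j l
  by_contra hne
  have hdet : (x.submatrix ![i, k] ![j, l]).det ≠ 0 := by
    simpa only [det_fin_two, submatrix_apply, cons_val_zero, cons_val_one, ne_eq, sub_eq_zero]
      using hne
  have hrank : (x.submatrix ![i, k] ![j, l]).rank = 2 := by
    simpa using rank_of_det_ne_zero hdet
  have hle := rank_submatrix_le x ![i, k] ![j, l]
  lia

namespace TwoMinorsVanish

variable {R ι : Type*} [CommSemiring R] [Fintype ι] {x : Matrix ι ι R}

theorem mul_mul_self (hx : TwoMinorsVanish x) (a : Matrix ι ι R) :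
    x * a * x = (x * a).trace • x := by
  ext i l
  calc (x * a * x) i l = ∑ k, ∑ j, x i j * a j k * x k l := by
        simp only [mul_apply, Finset.sum_mul]
    _ = ∑ k, ∑ j, x k j * a j k * x i l := by
        refine Finset.sum_congr rfl fun k _ ↦ Finset.sum_congr rfl fun j _ ↦ ?_
        rw [mul_right_comm, hx i k j l]
        ring
    _ = ((x * a).trace • x) i l := by
        simp only [trace, diag_apply, mul_apply, Matrix.smul_apply, smul_eq_mul, Finset.sum_mul]

theorem mul_self (hx : TwoMinorsVanish x) : x * x = x.trace • x := by
  classical simpa using hx.mul_mul_self 1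

theorem trace_mul_anticommutator (hx : TwoMinorsVanish x) (w : Matrix ι ι R) :
    (x * (x * w + w * x)).trace = x.trace * (x * w + w * x).trace := by
  have hxxw : (x * (x * w)).trace = x.trace * (x * w).trace := by
    rw [← mul_assoc, hx.mul_self, smul_mul_assoc, trace_smul, smul_eq_mul]
  have hxwx : (x * (w * x)).trace = x.trace * (w * x).trace := by
    rw [← mul_assoc, hx.mul_mul_self, trace_smul, smul_eq_mul, mul_comm, trace_mul_comm x w]
  rw [mul_add, trace_add, trace_add, hxxw, hxwx, mul_add]

theorem anticommutator_mul_add_mul_anticommutator (hx : TwoMinorsVanish x) (w : Matrix ι ι R) :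
    (x * w + w * x) * x + x * (x * w + w * x) =
      (x * w + w * x).trace • x + x.trace • (x * w + w * x) := by
  calc (x * w + w * x) * x + x * (x * w + w * x)
      = x * w * x + x * w * x + (x * x * w + w * (x * x)) := by noncomm_ring
    _ = (x * w).trace • x + (w * x).trace • x + x.trace • (x * w + w * x) := by
        rw [hx.mul_mul_self, hx.mul_self, smul_mul_assoc, mul_smul_comm, smul_add,
          trace_mul_comm w x]
    _ = (x * w + w * x).trace • x + x.trace • (x * w + w * x) := by rw [trace_add, add_smul]

end TwoMinorsVanish

theorem rank_one_psd_trace_sq_jordan_general {R ι : Type*} [CommSemiring R] [Fintype ι]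
    {x p w : Matrix ι ι R} (hx : TwoMinorsVanish x) (hp : p = x * w + w * x) :
    ((p * x + x * p) * (p * x + x * p)).trace
      = x.trace ^ 2 * ((p * p).trace + 3 * p.trace ^ 2) := by
  have hpx : p * x + x * p = p.trace • x + x.trace • p :=
    hp ▸ hx.anticommutator_mul_add_mul_anticommutator w
  have hxp : (x * p).trace = x.trace * p.trace := hp ▸ hx.trace_mul_anticommutator w
  rw [hpx]
  simp only [add_mul, mul_add, smul_mul_assoc, mul_smul_comm, trace_add, trace_smul, smul_eq_mul,
    hx.mul_self, trace_mul_comm p x, hxp]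
  ring

theorem rank_one_psd_trace_sq_jordan
    (n : ℕ) (hn : 2 ≤ n) (x p : Matrix (Fin n) (Fin n) ℂ)
    (hherm : x.IsHermitian) (hpsd : x.PosSemidef) (hrank : x.rank = 1)
    (hp : ∃ w : Matrix (Fin n) (Fin n) ℂ, w.IsHermitian ∧ p = jordanProd x w) :
    (jordanProd p x * jordanProd p x).trace
      = (x.trace ^ 2 / 4) * ((p * p).trace + 3 * p.trace ^ 2) := by
  obtain ⟨w, -, hpw⟩ := hp
  have hanti : p = x * ((1 / 2 : ℂ) • w) + ((1 / 2 : ℂ) • w) * x := by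
    rw [hpw, jordanProd, smul_add, mul_smul_comm, smul_mul_assoc]
  have htrace := rank_one_psd_trace_sq_jordan_general
    (twoMinorsVanish_of_rank_le_one hrank.le) hanti
  simp only [jordanProd, smul_mul_assoc, mul_smul_comm, trace_smul, smul_eq_mul, htrace]
  ring
end

section
/- Kepler Hamiltonian from the dynamic symmetry (example, Section 3.3): with the notation of the context, ⟨x | π∘π⟩ = r·|p|², and consequently (1/2)·⟨x|π∘π⟩/⟨e|x⟩ − 1/⟨e|x⟩ = (1/2)·|p|² − 1/|q|. -/
open Matrix

/-- The Jordan product on `V = ℝ × ℝ³` (the Jordan algebra `Γ(3)`). -/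
def gammaProd (a b : ℝ × (Fin 3 → ℝ)) : ℝ × (Fin 3 → ℝ) :=
  (a.1 * b.1 + a.2 ⬝ᵥ b.2, a.1 • b.2 + b.1 • a.2)

/-- The inner product on `V = ℝ × ℝ³`, the standard one on `ℝ⁴`. -/
def gammaInner (a b : ℝ × (Fin 3 → ℝ)) : ℝ :=
  a.1 * b.1 + a.2 ⬝ᵥ b.2

/-!
Let `x̄ = (r, -q)` be the conjugate of `x = (r, q)`. Since `q · q = r²`, the point `x` lies on the
light cone, i.e. `x ∘ x̄ = 0`, and associativity of the inner product, `⟨a ∘ b | c⟩ = ⟨a | b ∘ c⟩`,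
makes `⟨x | a ∘ a⟩` invariant under `a ↦ a + c x̄`. The momentum `π` is `(0, p)` shifted in this
way, the coefficient `c = (p · q) / (2 r²)` being the one which makes `π` orthogonal to `x̄`, hence
tangent to the light cone at `x`; and `⟨x | (0, p) ∘ (0, p)⟩ = r (p · p)` is immediate.
-/

/-- The conjugation `(a₀, a⃗) ↦ (a₀, -a⃗)` of the Jordan algebra `Γ(3)`, written `x ↦ x̄`. It serves
to express that `x` is on the light cone as `x ∘ x̄ = 0`. -/
def gammaConj (x : ℝ × (Fin 3 → ℝ)) : ℝ × (Fin 3 → ℝ) :=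
  (x.1, -x.2)

section GammaAlgebra

variable (a b c : ℝ × (Fin 3 → ℝ)) (t : ℝ)

theorem gammaProd_comm : gammaProd a b = gammaProd b a := by
  simp only [gammaProd, mul_comm a.1, dotProduct_comm a.2, add_comm (a.1 • b.2)]

theorem gammaProd_add : gammaProd a (b + c) = gammaProd a b + gammaProd a c := by
  refine Prod.ext ?_ ?_ <;>
    simp only [gammaProd, Prod.fst_add, Prod.snd_add, dotProduct_add]
  · ring
  · module

theorem gammaProd_smul : gammaProd a (t • b) = t • gammaProd a b := by
  refine Prod.ext ?_ ?_ <;>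
    simp only [gammaProd, Prod.smul_fst, Prod.smul_snd, dotProduct_smul, smul_eq_mul]
  · ring
  · module

theorem gammaInner_gammaProd_assoc :
    gammaInner (gammaProd a b) c = gammaInner a (gammaProd b c) := by
  simp only [gammaInner, gammaProd, add_dotProduct, dotProduct_add, smul_dotProduct,
    dotProduct_smul, smul_eq_mul]
  ring

theorem gammaInner_one_zero_left : gammaInner (1, 0) a = a.1 := by
  simp [gammaInner]

theorem gammaProd_zero_mk_self (v : Fin 3 → ℝ) : gammaProd (0, v) (0, v) = (v ⬝ᵥ v, 0) := by
  simp [gammaProd]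

theorem gammaProd_gammaConj_self :
    gammaProd a (gammaConj a) = (a.1 ^ 2 - a.2 ⬝ᵥ a.2, 0) := by
  simp [gammaProd, gammaConj, sq, sub_eq_add_neg]

end GammaAlgebra

section LightCone

variable {x : ℝ × (Fin 3 → ℝ)}

theorem gammaProd_add_smul_gammaConj (hx : x.2 ⬝ᵥ x.2 = x.1 ^ 2) (a : ℝ × (Fin 3 → ℝ)) (c : ℝ) :
    gammaProd x (a + c • gammaConj x) = gammaProd x a := by
  have conj_annihilates : gammaProd x (gammaConj x) = 0 := by
    rw [gammaProd_gammaConj_self, hx, sub_self, Prod.mk_zero_zero]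
  rw [gammaProd_add, gammaProd_smul, conj_annihilates, smul_zero, add_zero]

theorem gammaInner_gammaProd_self_congr {a b : ℝ × (Fin 3 → ℝ)}
    (h : gammaProd x a = gammaProd x b) :
    gammaInner x (gammaProd a a) = gammaInner x (gammaProd b b) :=
  calc
    gammaInner x (gammaProd a a) = gammaInner x (gammaProd b a) := by
      rw [← gammaInner_gammaProd_assoc, h, gammaInner_gammaProd_assoc]
    _ = gammaInner x (gammaProd a b) := by rw [gammaProd_comm]
    _ = gammaInner x (gammaProd b b) := by
      rw [← gammaInner_gammaProd_assoc, h, gammaInner_gammaProd_assoc]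

theorem gammaInner_gammaProd_self_zero_mk_add_smul_gammaConj (hx : x.2 ⬝ᵥ x.2 = x.1 ^ 2)
    (p : Fin 3 → ℝ) (c : ℝ) :
    gammaInner x (gammaProd ((0, p) + c • gammaConj x) ((0, p) + c • gammaConj x)) =
      x.1 * (p ⬝ᵥ p) := by
  rw [gammaInner_gammaProd_self_congr (gammaProd_add_smul_gammaConj hx (0, p) c),
    gammaProd_zero_mk_self, gammaInner, dotProduct_zero, add_zero]

end LightCone

theorem kepler_hamiltonian_from_dynamic_symmetry
    (q p : Fin 3 → ℝ) (hq : q ≠ 0) :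
    let r : ℝ := Real.sqrt (q ⬝ᵥ q)
    let x : ℝ × (Fin 3 → ℝ) := (r, q)
    let π : ℝ × (Fin 3 → ℝ) := ((p ⬝ᵥ q) / (2 * r), p - ((p ⬝ᵥ q) / (2 * r ^ 2)) • q)
    let e : ℝ × (Fin 3 → ℝ) := (1, 0)
    gammaInner x (gammaProd π π) = r * (p ⬝ᵥ p) ∧
    (1 / 2 : ℝ) * gammaInner x (gammaProd π π) / gammaInner e x - 1 / gammaInner e x
      = (1 / 2 : ℝ) * (p ⬝ᵥ p) - 1 / r := by
  intro r x π e
  have norm_sq_pos : 0 < q ⬝ᵥ q := by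
    simpa using dotProduct_self_star_pos_iff.mpr hq
  have r_ne_zero : r ≠ 0 := (Real.sqrt_pos.mpr norm_sq_pos).ne'
  have x_lightlike : x.2 ⬝ᵥ x.2 = x.1 ^ 2 := (Real.sq_sqrt norm_sq_pos.le).symm
  have π_eq : π = (0, p) + ((p ⬝ᵥ q) / (2 * r ^ 2)) • gammaConj x := by
    refine Prod.ext ?_ ?_
    · simp only [π, x, gammaConj, Prod.fst_add, Prod.smul_fst, smul_eq_mul, zero_add]
      field_simp
    · simp only [π, x, gammaConj, Prod.snd_add, Prod.smul_snd, smul_neg, sub_eq_add_neg]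
  have inner_x_π_sq : gammaInner x (gammaProd π π) = r * (p ⬝ᵥ p) := by
    rw [π_eq, gammaInner_gammaProd_self_zero_mk_add_smul_gammaConj x_lightlike]
  refine ⟨inner_x_π_sq, ?_⟩
  rw [inner_x_π_sq, gammaInner_one_zero_left, mul_div_assoc, mul_div_cancel_left₀ _ r_ne_zero]
end
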